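/- The rise operation (T, T') ↦ ((T, ε), (ε, T')) is a bijection between modern Tamari intervals of size n and new Tamari intervals of size n+1; hence the number of new Tamari intervals of size n+1 equals 3·2^{n-1}/((n+1)(n+2)) · C(2n, n). -/

import Mathlib

/-- Binary trees: a leaf or a binary node with two subtrees. -/
inductive BT : Type
  | leaf : BT
  | node : BT → BT → BT

namespace BT

/-- Number of binary (internal) nodes. -/
def size : BT → ℕ
  | leaf => 0
  | node l r => l.size + r.size + 1

/-- One right rotation somewhere in the tree: ((A,B),C) ↦ (A,(B,C)). -/
inductive Rot : BT → BT → Prop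
  | rotate (A B C : BT) : Rot (node (node A B) C) (node A (node B C))
  | left {l l' : BT} (r : BT) : Rot l l' → Rot (node l r) (node l' r)
  | right (l : BT) {r r' : BT} : Rot r r' → Rot (node l r) (node l r')

/-- Tamari order: reflexive-transitive closure of right rotation. -/
def tle (T T' : BT) : Prop := Relation.ReflTransGen Rot T T'

/-- Bracket-vector: sizes of right subtrees of nodes, in infix order. -/
def bracket : BT → List ℕ
  | leaf => []
  | node l r => bracket l ++ r.size :: bracket r

/-- Dual bracket-vector: sizes of left subtrees of nodes, in infix order. -/
def dualBracket : BT → List ℕ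
  | leaf => []
  | node l r => dualBracket l ++ l.size :: dualBracket r

/-- Canopy word: for each leaf (left to right), 1 if it is a left child, 0 if a right child;
the argument `b` is the value assigned to the tree if it is itself a leaf. -/
def canopyAux (b : ℕ) : BT → List ℕ
  | leaf => [b]
  | node l r => canopyAux 1 l ++ canopyAux 0 r

/-- Canopy-vector of a binary tree. -/
def canopy (T : BT) : List ℕ := canopyAux 1 T

/-- Left-right mirror. -/
def mir : BT → BT
  | leaf => leaf
  | node l r => node (mir r) (mir l)

/-- Tamari interval of size n. -/
def interval (p : BT × BT) (n : ℕ) : Prop :=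
  p.1.size = n ∧ p.2.size = n ∧ tle p.1 p.2

/-- Tamari interval (of unspecified size). -/
def isInt (p : BT × BT) : Prop := p.1.size = p.2.size ∧ tle p.1 p.2

/-- The rise operation (T,T') ↦ ((T,ε),(ε,T')). -/
def riseF (p : BT × BT) : BT × BT := (node p.1 leaf, node leaf p.2)

/-- An interval is modern when its rise is again an interval. -/
def modern (p : BT × BT) : Prop := tle (node p.1 leaf) (node leaf p.2)

/-- Infinitely modern: every iterated rise is an interval. -/
def infModern (p : BT × BT) : Prop :=
  ∀ k : ℕ, tle ((riseF^[k] p).1) ((riseF^[k] p).2)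

/-- Synchronized: equal canopies. -/
def synced (p : BT × BT) : Prop := canopy p.1 = canopy p.2

/-- Self-dual: equal to its dual (mir T', mir T). -/
def selfDual (p : BT × BT) : Prop := mir p.2 = p.1 ∧ mir p.1 = p.2

/-- Number of positions where the two canopies agree. -/
def agreeCount (p : BT × BT) : ℕ :=
  ((List.range (p.1.size + 1)).filter
    (fun i => (canopy p.1).getD i 0 == (canopy p.2).getD i 0)).length

/-- Number of canopy positions of joint type (a on top, b on bottom), for an interval (T,T')
with T' the upper tree. -/
def typeCount (a b : ℕ) (p : BT × BT) : ℕ :=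
  ((List.range (p.1.size + 1)).filter
    (fun i => ((canopy p.2).getD i 0 == a) && ((canopy p.1).getD i 0 == b))).length

end BT

/-- New interval: a Tamari interval that is the rise of some Tamari interval. -/
def BT.isNew (p : BT × BT) : Prop :=
  BT.tle p.1 p.2 ∧ ∃ S S' : BT, BT.tle S S' ∧ p = BT.riseF (S, S')

/-!
A tree lies below `(A', B')` exactly when it is `A ∘ D`, the result of replacing the leftmost leaf
of some `D ≠ ε` by `A`, where `A` lies below `A'` and `D` without its leftmost node lies below `B'`.
Modernity of `(T, T')` says that `(T, ε)` without its leftmost node lies below `T'`. Hence a modern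
interval of positive size either splits into two modern intervals, or has `T' = (ε, B)` and arises
from a modern interval `(D, B)` by inserting a leftmost node at one of the nodes on the left branch
of `D`. Marking the length of that branch by a catalytic variable turns this decomposition into a
quadratic equation with a unique power series solution, which can be written down explicitly in
terms of two Catalan series.
-/

namespace BT

open Finset.HasAntidiagonal (antidiagonal mem_antidiagonal)

/-! ### Grafting and leftmost nodes -/

/-- The tree obtained from `D` by replacing its leftmost leaf with `A`. -/
def graft (A : BT) : BT → BT
  | leaf => A
  | node l r => node (graft A l) r

/-- The tree obtained by deleting the leftmost node, whose right subtree takes its place; the leaf,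
which has no node, is left unchanged. -/
def eraseLeft : BT → BT
  | leaf => leaf
  | node leaf r => r
  | node (node a b) r => node (eraseLeft (node a b)) r

/-- The number of nodes on the left branch. On the lower tree of a modern interval this is the
catalytic parameter. -/
def leftDepth : BT → ℕ
  | leaf => 0
  | node l _ => leftDepth l + 1

/-- The tree obtained by inserting a new leftmost node at depth `k` of the left branch, the subtree
found there becoming its right subtree. Depths beyond `leftDepth` are truncated. -/
def insertLeft : ℕ → BT → BT
  | 0, T => node leaf T
  | _ + 1, leaf => node leaf leaf
  | k + 1, node l r => node (insertLeft k l) r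

theorem node_ne_leaf (l r : BT) : node l r ≠ leaf := nofun

theorem size_eq_zero {T : BT} : T.size = 0 ↔ T = leaf := by
  cases T <;> simp [size]

theorem size_eq_one {T : BT} : T.size = 1 ↔ T = node leaf leaf := by
  cases T <;> simp [size, size_eq_zero]

theorem size_graft (A D : BT) : (graft A D).size = A.size + D.size := by
  induction D with
  | leaf => rfl
  | node l r ihl _ => simp only [graft, size, ihl]; omega

theorem leftDepth_graft (A D : BT) : (graft A D).leftDepth = A.leftDepth + D.leftDepth := by
  induction D with
  | leaf => rfl
  | node l r ihl _ => simp only [graft, leftDepth, ihl]; omega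

theorem leaf_graft (D : BT) : graft leaf D = D := by
  induction D with
  | leaf => rfl
  | node l r ihl _ => rw [graft, ihl]

theorem graft_assoc (A B C : BT) : graft (graft A B) C = graft A (graft B C) := by
  induction C with
  | leaf => rfl
  | node l r ihl _ => rw [graft, ihl, graft, graft]

theorem graft_ne_leaf {A : BT} (D : BT) (hA : A ≠ leaf) : graft A D ≠ leaf := by
  cases D with
  | leaf => exact hA
  | node l r => exact node_ne_leaf _ r

theorem exists_graft_of_graft_eq_graft {A D B E : BT} (h : graft A D = graft B E)
    (hsize : A.size ≤ B.size) : ∃ C, B = graft A C ∧ D = graft C E := by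
  induction E generalizing D with
  | leaf => exact ⟨D, h.symm, rfl⟩
  | node l r ihl _ =>
    cases D with
    | leaf =>
      have hsizes := congrArg size h
      simp only [size_graft, size] at hsizes
      omega
    | node l' r' =>
      obtain ⟨hl, rfl⟩ := node.inj h
      obtain ⟨C, rfl, rfl⟩ := ihl hl
      exact ⟨C, rfl, rfl⟩

theorem graft_inj {A D B E : BT} (hsize : A.size = B.size) :
    graft A D = graft B E ↔ A = B ∧ D = E := by
  refine ⟨fun h => ?_, fun ⟨hA, hD⟩ => hA ▸ hD ▸ rfl⟩
  obtain ⟨C, rfl, rfl⟩ := exists_graft_of_graft_eq_graft h hsize.le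
  obtain rfl : C = leaf := size_eq_zero.1 (by rw [size_graft] at hsize; omega)
  exact ⟨rfl, leaf_graft E⟩

theorem eraseLeft_node {l : BT} (r : BT) (hl : l ≠ leaf) :
    eraseLeft (node l r) = node (eraseLeft l) r := by
  cases l with
  | leaf => contradiction
  | node a b => rfl

theorem size_eraseLeft_add_one {T : BT} (hT : T ≠ leaf) : (eraseLeft T).size + 1 = T.size := by
  induction T with
  | leaf => contradiction
  | node l r ihl _ =>
    rcases eq_or_ne l leaf with rfl | hl
    · simp only [eraseLeft, size, Nat.zero_add]
    · rw [eraseLeft_node r hl, size, size, ← ihl hl]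
      omega

theorem eraseLeft_graft {A : BT} (D : BT) (hA : A ≠ leaf) :
    eraseLeft (graft A D) = graft (eraseLeft A) D := by
  induction D with
  | leaf => rfl
  | node l r ihl _ => rw [graft, eraseLeft_node r (graft_ne_leaf l hA), ihl, graft]

theorem eraseLeft_node_leaf_leaf_graft (D : BT) : eraseLeft (graft (node leaf leaf) D) = D := by
  rw [eraseLeft_graft D (node_ne_leaf leaf leaf), eraseLeft, leaf_graft]

theorem node_leaf_graft (A D : BT) :
    graft (node A leaf) D = graft A (graft (node leaf leaf) D) :=
  graft_assoc A (node leaf leaf) D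

theorem insertLeft_ne_leaf (k : ℕ) (T : BT) : insertLeft k T ≠ leaf := by
  cases k <;> cases T <;> exact nofun

theorem eraseLeft_insertLeft (k : ℕ) (T : BT) : eraseLeft (insertLeft k T) = T := by
  induction T generalizing k with
  | leaf => cases k <;> rfl
  | node l r ihl _ =>
    cases k with
    | zero => rfl
    | succ k => rw [insertLeft, eraseLeft_node r (insertLeft_ne_leaf k l), ihl]

theorem leftDepth_insertLeft {k : ℕ} {T : BT} (hk : k ≤ T.leftDepth) :
    (insertLeft k T).leftDepth = k + 1 := by
  induction T generalizing k with
  | leaf =>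
    obtain rfl : k = 0 := Nat.le_zero.1 hk
    rfl
  | node l r ihl _ =>
    cases k with
    | zero => rfl
    | succ k => rw [insertLeft, leftDepth, ihl (Nat.le_of_succ_le_succ hk)]

theorem insertLeft_leftDepth (T : BT) : insertLeft T.leftDepth T = graft (node leaf leaf) T := by
  induction T with
  | leaf => rfl
  | node l r ihl _ => rw [leftDepth, insertLeft, ihl, graft]

theorem exists_insertLeft_eraseLeft_eq {T : BT} (hT : T ≠ leaf) :
    ∃ k ≤ (eraseLeft T).leftDepth, insertLeft k (eraseLeft T) = T := by
  induction T with
  | leaf => contradiction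
  | node l r ihl _ =>
    rcases eq_or_ne l leaf with rfl | hl
    · exact ⟨0, Nat.zero_le _, rfl⟩
    · obtain ⟨k, hk, hkl⟩ := ihl hl
      rw [eraseLeft_node r hl]
      exact ⟨k + 1, Nat.succ_le_succ hk, by rw [insertLeft, hkl]⟩

/-! ### The Tamari order -/

theorem Rot.size_eq {T S : BT} (h : Rot T S) : T.size = S.size := by
  induction h with
  | rotate A B C => simp only [size]; omega
  | left r _ ih => simp only [size, ih]
  | right l _ ih => simp only [size, ih]

theorem Rot.graft (A : BT) {D D' : BT} (h : Rot D D') : Rot (graft A D) (graft A D') := by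
  induction h with
  | rotate B C D => exact .rotate _ C D
  | left r _ ih => exact .left r ih
  | right l h _ => exact .right _ h

theorem Rot.ne_leaf {T S : BT} (h : Rot T S) : T ≠ leaf := by
  cases h <;> exact nofun

theorem Rot.eraseLeft {T S : BT} (h : Rot T S) : tle (eraseLeft T) (eraseLeft S) := by
  induction h with
  | rotate A B C =>
    rcases eq_or_ne A leaf with rfl | hA
    · exact .refl
    · rw [eraseLeft_node C (node_ne_leaf A B), eraseLeft_node B hA, eraseLeft_node _ hA]
      exact .single (.rotate _ B C)
  | @left l l' r h ih =>
    have hl' : l' ≠ leaf := fun hl' => h.ne_leaf (size_eq_zero.1 (by rw [h.size_eq, hl', size]))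
    rw [eraseLeft_node r h.ne_leaf, eraseLeft_node r hl']
    exact ih.lift (node · r) fun _ _ => .left r
  | right l h _ =>
    rcases eq_or_ne l leaf with rfl | hl
    · exact .single h
    · rw [eraseLeft_node _ hl, eraseLeft_node _ hl]
      exact .single (.right _ h)

theorem exists_of_rot_graft {T A D : BT} (h : Rot T (graft A D)) :
    (∃ A₀, T = graft A₀ D ∧ Rot A₀ A) ∨ ∃ D₀, T = graft A D₀ ∧ Rot D₀ D := by
  induction D generalizing T with
  | leaf => exact .inl ⟨T, rfl, h⟩
  | node l r ihl _ =>
    rw [graft] at h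
    generalize hg : graft A l = g at h ihl
    cases h with
    | rotate _ Y C => exact .inr ⟨node (node l Y) C, by rw [graft, graft, hg], .rotate l Y C⟩
    | left _ hrot =>
      rcases ihl hrot with ⟨A₀, rfl, hA₀⟩ | ⟨D₀, rfl, hD₀⟩
      · exact .inl ⟨A₀, rfl, hA₀⟩
      · exact .inr ⟨node D₀ r, rfl, .left r hD₀⟩
    | @right _ r₀ _ hrot => exact .inr ⟨node l r₀, by rw [graft, hg], .right l hrot⟩

theorem tle.size_eq {T S : BT} (h : tle T S) : T.size = S.size := by
  induction h with
  | refl => rfl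
  | tail _ hrot ih => rw [ih, hrot.size_eq]

theorem tle.node_left {l l' : BT} (h : tle l l') (r : BT) : tle (node l r) (node l' r) :=
  h.lift (node · r) fun _ _ => .left r

theorem tle.node_right (l : BT) {r r' : BT} (h : tle r r') : tle (node l r) (node l r') :=
  h.lift (node l) fun _ _ => .right l

theorem tle.graft_left {A A' : BT} (h : tle A A') (D : BT) : tle (graft A D) (graft A' D) := by
  induction D with
  | leaf => exact h
  | node l r ihl _ => exact ihl.node_left r

theorem tle.graft_right (A : BT) {D D' : BT} (h : tle D D') : tle (graft A D) (graft A D') :=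
  h.lift (graft A) fun _ _ => .graft A

theorem tle_node_leaf_eraseLeft {T : BT} (hT : T ≠ leaf) : tle T (node leaf (eraseLeft T)) := by
  induction T with
  | leaf => contradiction
  | node l r ihl _ =>
    rcases eq_or_ne l leaf with rfl | hl
    · exact .refl
    · rw [eraseLeft_node r hl]
      exact ((ihl hl).node_left r).tail (.rotate _ _ r)

theorem tle_node_iff {T A' B' : BT} : tle T (node A' B') ↔
    ∃ A D, T = graft A D ∧ D ≠ leaf ∧ tle A A' ∧ tle (eraseLeft D) B' := by
  constructor
  · intro h
    induction h using Relation.ReflTransGen.head_induction_on with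
    | refl => exact ⟨A', node leaf B', rfl, node_ne_leaf leaf B', .refl, .refl⟩
    | head hrot _ ih =>
      obtain ⟨A, D, rfl, hD, hA, hB⟩ := ih
      rcases exists_of_rot_graft hrot with ⟨A₀, rfl, hA₀⟩ | ⟨D₀, rfl, hD₀⟩
      · exact ⟨A₀, D, rfl, hD, .head hA₀ hA, hB⟩
      · exact ⟨A, D₀, rfl, hD₀.ne_leaf, hA, hD₀.eraseLeft.trans hB⟩
  · rintro ⟨A, D, rfl, hD, hA, hB⟩
    have hgraft : tle (graft A D) (graft A' D) := hA.graft_left D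
    have herase : tle (graft A' D) (node A' (eraseLeft D)) :=
      (tle_node_leaf_eraseLeft hD).graft_right A'
    exact (hgraft.trans herase).trans (hB.node_right A')

theorem tle_node_leaf_iff {T B : BT} : tle T (node leaf B) ↔ T ≠ leaf ∧ tle (eraseLeft T) B := by
  refine ⟨fun h => ?_, fun ⟨hT, hB⟩ => (tle_node_leaf_eraseLeft hT).trans (hB.node_right leaf)⟩
  obtain ⟨A, D, rfl, hD, hA, hB⟩ := tle_node_iff.1 h
  obtain rfl : A = leaf := size_eq_zero.1 hA.size_eq
  rw [leaf_graft]
  exact ⟨hD, hB⟩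

/-! ### Decomposition of modern intervals -/

/-- A pair of trees that is a Tamari interval and is modern. -/
structure IsModernInterval (p : BT × BT) : Prop where
  tle : tle p.1 p.2
  modern : modern p

/-- The interval `((A, ε) ∘ D, (A', B))` built from intervals `(A, A')` and `(D, B)`, where `∘`
denotes grafting. -/
def join (p q : BT × BT) : BT × BT := (graft (node p.1 leaf) q.1, node p.2 q.2)

/-- The interval obtained from `(T, B)` by inserting a leftmost node at depth `k` in `T` and
replacing `B` by `(ε, B)`. -/
def insertInterval (k : ℕ) (p : BT × BT) : BT × BT := (insertLeft k p.1, node leaf p.2)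

theorem modern_iff {p : BT × BT} : modern p ↔ BT.tle (eraseLeft (node p.1 leaf)) p.2 := by
  rw [modern, tle_node_leaf_iff, and_iff_right (node_ne_leaf p.1 leaf)]

theorem isModernInterval_leaf : IsModernInterval (leaf, leaf) :=
  ⟨.refl, .refl⟩

theorem isModernInterval_node_leaf_iff {T B : BT} :
    IsModernInterval (T, node leaf B) ↔ T ≠ leaf ∧ IsModernInterval (eraseLeft T, B) := by
  constructor
  · rintro ⟨hle, hmodern⟩
    obtain ⟨hT, hB⟩ := tle_node_leaf_iff.1 hle
    rw [modern_iff, eraseLeft_node leaf hT] at hmodern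
    exact ⟨hT, hB, hmodern⟩
  · rintro ⟨hT, hle, hmodern⟩
    refine ⟨tle_node_leaf_iff.2 ⟨hT, hle⟩, modern_iff.2 ?_⟩
    rw [eraseLeft_node leaf hT]
    exact hmodern

theorem isModernInterval_insertInterval_iff {k : ℕ} {p : BT × BT} :
    IsModernInterval (insertInterval k p) ↔ IsModernInterval p := by
  rw [insertInterval, isModernInterval_node_leaf_iff, eraseLeft_insertLeft,
    and_iff_right (insertLeft_ne_leaf k p.1)]

theorem IsModernInterval.join {p q : BT × BT} (hp : IsModernInterval p)
    (hq : IsModernInterval q) : IsModernInterval (join p q) where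
  tle := by
    refine tle_node_iff.2 ⟨p.1, graft (node leaf leaf) q.1, node_leaf_graft _ _,
      graft_ne_leaf _ (node_ne_leaf leaf leaf), hp.tle, ?_⟩
    rw [eraseLeft_node_leaf_leaf_graft]
    exact hq.tle
  modern := by
    refine modern_iff.2 (tle_node_iff.2 ⟨eraseLeft (node p.1 leaf), node q.1 leaf, ?_,
      node_ne_leaf q.1 leaf, modern_iff.1 hp.modern, modern_iff.1 hq.modern⟩)
    exact eraseLeft_graft (node q.1 leaf) (node_ne_leaf p.1 leaf)

theorem IsModernInterval.exists_join_eq {T A' B : BT} (h : IsModernInterval (T, node A' B))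
    (hA' : A' ≠ leaf) :
    ∃ A D, IsModernInterval (A, A') ∧ IsModernInterval (D, B) ∧
      BT.join (A, A') (D, B) = (T, node A' B) := by
  obtain ⟨A, D, rfl, -, hAA', hDB⟩ := tle_node_iff.1 h.tle
  obtain ⟨A₁, D₁, hsplit, hD₁, hA₁A', hD₁B⟩ := tle_node_iff.1 (modern_iff.1 h.modern)
  have hA : A ≠ leaf := fun hA => hA' (size_eq_zero.1 (by rw [← hAA'.size_eq, hA, size]))
  have hsize : (eraseLeft A).size + 1 = A₁.size := by
    rw [size_eraseLeft_add_one hA, hAA'.size_eq, hA₁A'.size_eq]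
  have hsplit' : graft (eraseLeft A) (node D leaf) = graft A₁ D₁ := by
    rw [← hsplit, ← eraseLeft_graft _ hA, graft]
  obtain ⟨C, rfl, hC⟩ := exists_graft_of_graft_eq_graft hsplit' (by omega)
  obtain rfl : C = node leaf leaf := size_eq_one.1 (by rw [size_graft] at hsize; omega)
  cases D₁ with
  | leaf => contradiction
  | node D' r =>
    obtain ⟨rfl, rfl⟩ := node.inj hC
    rw [eraseLeft_node_leaf_leaf_graft] at hDB
    refine ⟨A, D', ⟨hAA', modern_iff.2 ?_⟩, ⟨hDB, modern_iff.2 hD₁B⟩, ?_⟩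
    · rw [eraseLeft_node leaf hA]
      exact hA₁A'
    · rw [BT.join, node_leaf_graft]

theorem IsModernInterval.exists_join_or_insertInterval_eq {p : BT × BT} (hp : IsModernInterval p)
    (hleaf : p.2 ≠ leaf) :
    (∃ q r, IsModernInterval q ∧ IsModernInterval r ∧ BT.join q r = p) ∨
      ∃ q k, IsModernInterval q ∧ k < q.1.leftDepth ∧ insertInterval k q = p := by
  obtain ⟨T, _ | ⟨A', B⟩⟩ := p
  · contradiction
  rcases eq_or_ne A' leaf with rfl | hA'
  · obtain ⟨hT, hTB⟩ := isModernInterval_node_leaf_iff.1 hp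
    obtain ⟨k, hk, hkT⟩ := exists_insertLeft_eraseLeft_eq hT
    rcases hk.lt_or_eq with hlt | rfl
    · exact .inr ⟨_, k, hTB, hlt, by rw [insertInterval, hkT]⟩
    · rw [insertLeft_leftDepth] at hkT
      exact .inl ⟨_, _, isModernInterval_leaf, hTB, by rw [BT.join, hkT]⟩
  · obtain ⟨A, D, hA, hD, hjoin⟩ := hp.exists_join_eq hA'
    exact .inl ⟨_, _, hA, hD, hjoin⟩

theorem join_inj {p q p' q' : BT × BT} (hp : tle p.1 p.2) (hp' : tle p'.1 p'.2) :
    join p q = join p' q' ↔ p = p' ∧ q = q' := by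
  refine ⟨fun h => ?_, fun ⟨hpp', hqq'⟩ => hpp' ▸ hqq' ▸ rfl⟩
  obtain ⟨hgraft, hnode⟩ := Prod.mk.inj h
  obtain ⟨hp₂, hq₂⟩ := node.inj hnode
  have hsize : (node p.1 leaf).size = (node p'.1 leaf).size := by
    simp only [size, hp.size_eq, hp'.size_eq, hp₂]
  obtain ⟨hp₁, hq₁⟩ := (graft_inj hsize).1 hgraft
  exact ⟨Prod.ext (node.inj hp₁).1 hp₂, Prod.ext hq₁ hq₂⟩

theorem insertInterval_inj {k k' : ℕ} {p p' : BT × BT} (hk : k < p.1.leftDepth)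
    (hk' : k' < p'.1.leftDepth) :
    insertInterval k p = insertInterval k' p' ↔ k = k' ∧ p = p' := by
  refine ⟨fun h => ?_, fun ⟨hkk', hpp'⟩ => hkk' ▸ hpp' ▸ rfl⟩
  obtain ⟨hinsert, hnode⟩ := Prod.mk.inj h
  have hdepth := congrArg leftDepth hinsert
  rw [leftDepth_insertLeft hk.le, leftDepth_insertLeft hk'.le] at hdepth
  have herase := congrArg eraseLeft hinsert
  rw [eraseLeft_insertLeft, eraseLeft_insertLeft] at herase
  exact ⟨Nat.succ.inj hdepth, Prod.ext herase (node.inj hnode).2⟩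

theorem join_ne_insertInterval {p q p' : BT × BT} {k : ℕ} (hp : tle p.1 p.2)
    (hk : k < p'.1.leftDepth) : join p q ≠ insertInterval k p' := by
  intro h
  obtain ⟨hgraft, hnode⟩ := Prod.mk.inj h
  have hp₁ : p.1 = leaf := size_eq_zero.1 (by rw [hp.size_eq, (node.inj hnode).1, size])
  have hq : q.1 = p'.1 := by
    rw [← eraseLeft_node_leaf_leaf_graft q.1, ← eraseLeft_insertLeft k p'.1, ← hgraft, hp₁]
  have hdepth := congrArg leftDepth hgraft
  rw [leftDepth_insertLeft hk.le, leftDepth_graft, hq, hp₁] at hdepth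
  simp only [leftDepth] at hdepth
  omega

/-! ### Enumeration of modern intervals -/

/-- The bijection of `BT` with Mathlib's unlabelled binary trees. -/
def toBinaryTree : BT → BinaryTree Unit
  | leaf => .nil
  | node l r => .node () (toBinaryTree l) (toBinaryTree r)

theorem toBinaryTree_injective : Function.Injective toBinaryTree := by
  intro S T h
  induction S generalizing T with
  | leaf =>
    cases T with
    | leaf => rfl
    | node l r => exact nomatch h
  | node l r ihl ihr =>
    cases T with
    | leaf => exact nomatch h
    | node l' r' =>
      obtain ⟨-, hl, hr⟩ := BinaryTree.node.inj h
      rw [ihl hl, ihr hr]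

theorem numNodes_toBinaryTree (T : BT) : (toBinaryTree T).numNodes = T.size := by
  induction T with
  | leaf => rfl
  | node l r ihl ihr => rw [toBinaryTree, BinaryTree.numNodes, ihl, ihr, size]

theorem finite_setOf_size_eq (n : ℕ) : {T : BT | T.size = n}.Finite := by
  refine ((BinaryTree.treesOfNumNodesEq n).finite_toSet.preimage
    toBinaryTree_injective.injOn).subset fun T hT => ?_
  rw [Set.mem_preimage, Finset.mem_coe, BinaryTree.mem_treesOfNumNodesEq, numNodes_toBinaryTree]
  exact hT

theorem finite_setOf_isModernInterval (n : ℕ) :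
    {p : BT × BT | p.1.size = n ∧ IsModernInterval p}.Finite :=
  ((finite_setOf_size_eq n).prod (finite_setOf_size_eq n)).subset
    fun _ ⟨hn, hp⟩ => ⟨hn, hp.tle.size_eq.symm.trans hn⟩

/-- The finite set of modern intervals of size `n`. -/
noncomputable def modernIntervals (n : ℕ) : Finset (BT × BT) :=
  (finite_setOf_isModernInterval n).toFinset

theorem mem_modernIntervals {n : ℕ} {p : BT × BT} :
    p ∈ modernIntervals n ↔ p.1.size = n ∧ IsModernInterval p :=
  Set.Finite.mem_toFinset _

theorem modernIntervals_zero : modernIntervals 0 = {(leaf, leaf)} := by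
  ext p
  rw [mem_modernIntervals, Finset.mem_singleton, size_eq_zero]
  constructor
  · rintro ⟨hleaf, hp⟩
    exact Prod.ext hleaf (size_eq_zero.1 (by rw [← hp.tle.size_eq, hleaf, size]))
  · rintro rfl
    exact ⟨rfl, isModernInterval_leaf⟩

/-- The pairs of modern intervals of total size `n`, tagged by the two sizes. -/
noncomputable def modernPairs (n : ℕ) : Finset (Σ _ : ℕ × ℕ, (BT × BT) × (BT × BT)) :=
  (antidiagonal n).sigma fun ij => modernIntervals ij.1 ×ˢ modernIntervals ij.2

/-- The modern intervals of size `n` with a marked node on the left branch of the lower tree. -/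
noncomputable def markedModernIntervals (n : ℕ) : Finset (Σ _ : BT × BT, ℕ) :=
  (modernIntervals n).sigma fun p => Finset.range p.1.leftDepth

theorem mem_modernPairs {n : ℕ} {x : Σ _ : ℕ × ℕ, (BT × BT) × (BT × BT)} :
    x ∈ modernPairs n ↔ x.1.1 + x.1.2 = n ∧
      (x.2.1.1.size = x.1.1 ∧ IsModernInterval x.2.1) ∧
      x.2.2.1.size = x.1.2 ∧ IsModernInterval x.2.2 := by
  rw [modernPairs, Finset.mem_sigma, mem_antidiagonal, Finset.mem_product,
    mem_modernIntervals, mem_modernIntervals]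

theorem mem_markedModernIntervals {n : ℕ} {x : Σ _ : BT × BT, ℕ} :
    x ∈ markedModernIntervals n ↔
      (x.1.1.size = n ∧ IsModernInterval x.1) ∧ x.2 < x.1.1.leftDepth := by
  rw [markedModernIntervals, Finset.mem_sigma, mem_modernIntervals, Finset.mem_range]

theorem size_join_fst (p q : BT × BT) : (join p q).1.size = p.1.size + q.1.size + 1 := by
  rw [join, size_graft, size, size]
  omega

theorem size_insertInterval_fst (k : ℕ) (p : BT × BT) :
    (insertInterval k p).1.size = p.1.size + 1 := by
  rw [insertInterval, ← size_eraseLeft_add_one (insertLeft_ne_leaf k p.1), eraseLeft_insertLeft]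

theorem leftDepth_join_fst (p q : BT × BT) :
    (join p q).1.leftDepth = p.1.leftDepth + q.1.leftDepth + 1 := by
  rw [join, leftDepth_graft, leftDepth]
  omega

theorem injOn_join (n : ℕ) : (modernPairs n : Set (Σ _ : ℕ × ℕ, (BT × BT) × (BT × BT))).InjOn
    fun x => join x.2.1 x.2.2 := by
  rintro ⟨⟨i, j⟩, p, q⟩ h ⟨⟨i', j'⟩, p', q'⟩ h' hjoin
  obtain ⟨-, ⟨hi, hp⟩, hj, -⟩ := mem_modernPairs.1 h
  obtain ⟨-, ⟨hi', hp'⟩, hj', -⟩ := mem_modernPairs.1 h'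
  obtain ⟨rfl, rfl⟩ := (join_inj hp.tle hp'.tle).1 hjoin
  dsimp only at hi hj hi' hj'
  subst hi hj hi' hj'
  rfl

theorem injOn_insertInterval (n : ℕ) :
    (markedModernIntervals n : Set (Σ _ : BT × BT, ℕ)).InjOn fun x => insertInterval x.2 x.1 := by
  rintro ⟨p, k⟩ h ⟨p', k'⟩ h' hinsert
  obtain ⟨-, hk⟩ := mem_markedModernIntervals.1 h
  obtain ⟨-, hk'⟩ := mem_markedModernIntervals.1 h'
  obtain ⟨rfl, rfl⟩ := (insertInterval_inj hk hk').1 hinsert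
  rfl

open scoped Classical in
theorem disjoint_image_join_image_insertInterval (m n : ℕ) :
    Disjoint ((modernPairs m).image fun x => join x.2.1 x.2.2)
      ((markedModernIntervals n).image fun x => insertInterval x.2 x.1) := by
  simp only [Finset.disjoint_left, Finset.mem_image, mem_modernPairs, mem_markedModernIntervals]
  rintro _ ⟨x, ⟨-, ⟨-, hx⟩, -⟩, rfl⟩ ⟨y, ⟨-, hy⟩, hxy⟩
  exact join_ne_insertInterval hx.tle hy hxy.symm

open scoped Classical in
theorem modernIntervals_succ (n : ℕ) : modernIntervals (n + 1) =
    (modernPairs n).image (fun x => join x.2.1 x.2.2) ∪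
      (markedModernIntervals n).image (fun x => insertInterval x.2 x.1) := by
  ext p
  simp only [mem_modernIntervals, Finset.mem_union, Finset.mem_image, mem_modernPairs,
    mem_markedModernIntervals]
  constructor
  · rintro ⟨hsize, hp⟩
    have hleaf : p.2 ≠ leaf := by
      intro hleaf
      rw [hp.tle.size_eq, hleaf, size] at hsize
      exact n.succ_ne_zero hsize.symm
    rcases hp.exists_join_or_insertInterval_eq hleaf with
      ⟨q, r, hq, hr, rfl⟩ | ⟨q, k, hq, hk, rfl⟩
    · rw [size_join_fst, Nat.add_right_cancel_iff] at hsize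
      exact .inl ⟨⟨(q.1.size, r.1.size), q, r⟩, ⟨hsize, ⟨rfl, hq⟩, rfl, hr⟩, rfl⟩
    · rw [size_insertInterval_fst, Nat.add_right_cancel_iff] at hsize
      exact .inr ⟨⟨q, k⟩, ⟨⟨hsize, hq⟩, hk⟩, rfl⟩
  · rintro (⟨x, ⟨hn, ⟨hi, hp⟩, hj, hq⟩, rfl⟩ | ⟨x, ⟨⟨hn, hp⟩, -⟩, rfl⟩)
    · exact ⟨by rw [size_join_fst, hi, hj, hn], hp.join hq⟩
    · exact ⟨by rw [size_insertInterval_fst, hn], isModernInterval_insertInterval_iff.2 hp⟩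

theorem sum_modernIntervals_succ {M : Type*} [AddCommMonoid M] (f : ℕ → M) (n : ℕ) :
    ∑ p ∈ modernIntervals (n + 1), f p.1.leftDepth =
      (∑ ij ∈ antidiagonal n, ∑ p ∈ modernIntervals ij.1, ∑ q ∈ modernIntervals ij.2,
        f (p.1.leftDepth + q.1.leftDepth + 1)) +
      ∑ p ∈ modernIntervals n, ∑ k ∈ Finset.range p.1.leftDepth, f (k + 1) := by
  classical
  rw [modernIntervals_succ, Finset.sum_union (disjoint_image_join_image_insertInterval n n),
    Finset.sum_image (injOn_join n), Finset.sum_image (injOn_insertInterval n)]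
  congr 1
  · simp only [modernPairs, Finset.sum_sigma, Finset.sum_product, leftDepth_join_fst]
  · rw [markedModernIntervals, Finset.sum_sigma]
    refine Finset.sum_congr rfl fun p _ => Finset.sum_congr rfl fun k hk => ?_
    rw [insertInterval, leftDepth_insertLeft (Finset.mem_range.1 hk).le]

open Polynomial in
/-- The generating polynomial of the modern intervals of size `n`, where the exponent is the depth
of the leftmost leaf of the lower tree. -/
noncomputable def modernPoly (n : ℕ) : ℤ[X] :=
  ∑ p ∈ modernIntervals n, X ^ p.1.leftDepth

theorem modernPoly_zero : modernPoly 0 = 1 := by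
  rw [modernPoly, modernIntervals_zero, Finset.sum_singleton, leftDepth, pow_zero]

open Polynomial in
theorem X_sub_one_mul_sum_sum_range_X_pow (n : ℕ) :
    (X - 1) * ∑ p ∈ modernIntervals n, ∑ k ∈ Finset.range p.1.leftDepth, (X : ℤ[X]) ^ (k + 1) =
      X * (modernPoly n - C ((modernIntervals n).card : ℤ)) := by
  have hcard : C ((modernIntervals n).card : ℤ) = ∑ _p ∈ modernIntervals n, (1 : ℤ[X]) := by simp
  rw [hcard, modernPoly, ← Finset.sum_sub_distrib, Finset.mul_sum, Finset.mul_sum]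
  refine Finset.sum_congr rfl fun p _ => ?_
  rw [← mul_geom_sum]
  simp only [pow_succ', ← Finset.mul_sum]
  ring

open Polynomial in
theorem modernPoly_succ (n : ℕ) : (X - 1) * modernPoly (n + 1) =
    X * ((X - 1) * ∑ ij ∈ antidiagonal n, modernPoly ij.1 * modernPoly ij.2 +
      (modernPoly n - C ((modernIntervals n).card : ℤ))) := by
  have hjoin : ∑ ij ∈ antidiagonal n, ∑ p ∈ modernIntervals ij.1,
      ∑ q ∈ modernIntervals ij.2, (X : ℤ[X]) ^ (p.1.leftDepth + q.1.leftDepth + 1) =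
        X * ∑ ij ∈ antidiagonal n, modernPoly ij.1 * modernPoly ij.2 := by
    simp only [modernPoly, Finset.sum_mul_sum]
    simp only [Finset.mul_sum, pow_succ', pow_add]
  rw [modernPoly, sum_modernIntervals_succ, hjoin, mul_add,
    X_sub_one_mul_sum_sum_range_X_pow]
  ring

/-! ### The catalytic equation -/

open PowerSeries
open scoped Polynomial

section CatalyticEquation

/-- The equation of the generating function `M` of modern intervals, where `t` marks the size, `u`
is the catalytic variable, and `F` is the value of `M` at `u = 1`. -/
def CatalyticEquation {A : Type*} [CommRing A] (t u F M : A) : Prop :=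
  (u - 1) * (M - 1) = t * u * ((u - 1) * M ^ 2 + (M - F))

-- As a quadratic in `M`, the equation has discriminant `(u - 1 - s t u)² (1 - 4 c u)`, where
-- `c = t (1 + t s²)`, and `w` is the Catalan series in `c u`, so that `1 - 4 c u = (1 - 2 c u w)²`.
theorem catalyticEquation_of_sub_one_mul_eq {A : Type*} [CommRing A] {t u s w M : A}
    (hu : IsLeftRegular (u - 1)) (hs : s = 1 + 2 * t * s ^ 2)
    (hw : w = 1 + t * (1 + t * s ^ 2) * u * w ^ 2)
    (hM : (u - 1) * M = (1 + t * s ^ 2) * (u - 1 - s * t * u) * w + t * s ^ 2) :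
    CatalyticEquation t u (s - t * s ^ 2 * (1 + t * s ^ 2)) M := by
  refine hu ?_
  set N := (1 + t * s ^ 2) * (u - 1 - s * t * u) * w + t * s ^ 2 with hN
  set F := s - t * s ^ 2 * (1 + t * s ^ 2) with hF
  have hquadratic : (u - 1) * N - (u - 1) ^ 2 = t * u * (N ^ 2 + N - (u - 1) * F) := by
    rw [hN, hF]
    linear_combination (1 + t * s ^ 2) * (u - 1 - s * t * u) ^ 2 * hw +
      t * u * ((1 + t * s ^ 2) * (u - 1 - s * t * u) * w + (u - 1) * s) * hs
  rw [← hM] at hquadratic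
  linear_combination hquadratic

theorem exists_eq_one_add_mul_sq {A : Type*} [CommRing A] {x : A⟦X⟧} (hx : constantCoeff x = 0) :
    ∃ w : A⟦X⟧, w = 1 + x * w ^ 2 := by
  have hsubst : HasSubst x := .of_constantCoeff_zero' hx
  have hcatalan := congrArg (fun f => substAlgHom hsubst (map (Nat.castRingHom A) f))
    catalanSeries_sq_mul_X_add_one
  simp only [map_add, map_mul, map_pow, map_one, map_X, substAlgHom_X] at hcatalan
  exact ⟨_, by rw [mul_comm x, add_comm, hcatalan]⟩

theorem eq_of_eq_add_X_mul_sq {A : Type*} [CommRing A] {a y z : A⟦X⟧} (hy : y = a + X * y ^ 2)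
    (hz : z = a + X * z ^ 2) : y = z := by
  have hunit : IsUnit (1 - X * (y + z)) := isUnit_iff_constantCoeff.2 (by simp)
  rw [← sub_eq_zero, ← hunit.mul_right_eq_zero]
  linear_combination hy - hz

theorem C_dvd_iff_forall_dvd_coeff {A : Type*} [CommRing A] {a : A} {f : A⟦X⟧} :
    C a ∣ f ↔ ∀ n, a ∣ coeff n f := by
  constructor
  · rintro ⟨g, rfl⟩ n
    exact ⟨coeff n g, coeff_C_mul n g a⟩
  · intro h
    choose g hg using h
    exact ⟨mk g, by ext n; rw [coeff_C_mul, coeff_mk, hg]⟩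

variable {R : Type*} [CommRing R]

theorem C_X_sub_one_dvd_of_map_eval_one_eq_zero {f : R[X]⟦X⟧}
    (hf : map (Polynomial.evalRingHom 1) f = 0) : C (Polynomial.X - 1 : R[X]) ∣ f := by
  refine C_dvd_iff_forall_dvd_coeff.2 fun n => ?_
  rw [← Polynomial.C_1, Polynomial.dvd_iff_isRoot]
  simpa using congrArg (coeff n) hf

theorem isLeftRegular_X_sub_one : IsLeftRegular (Polynomial.X - 1 : R[X]) :=
  Polynomial.C_1 (R := R) ▸ (Polynomial.monic_X_sub_C 1).isRegular.left

theorem isLeftRegular_C_X_sub_one : IsLeftRegular (C (Polynomial.X - 1 : R[X])) := by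
  intro f g hfg
  ext1 n
  refine isLeftRegular_X_sub_one ?_
  simpa only [coeff_C_mul] using congrArg (coeff n) hfg

theorem exists_catalyticEquation {s : R⟦X⟧} (hs : s = 1 + 2 * X * s ^ 2) :
    ∃ M, CatalyticEquation X (C Polynomial.X)
      (map Polynomial.C (s - X * s ^ 2 * (1 + X * s ^ 2))) M := by
  set u : R[X]⟦X⟧ := C Polynomial.X with hu
  set σ := map Polynomial.C s with hσ
  have hu_sub_one : u - 1 = C (Polynomial.X - 1) := by rw [hu, map_sub, map_one]
  obtain ⟨w, hw⟩ := exists_eq_one_add_mul_sq (x := X * (1 + X * σ ^ 2) * u) (by simp)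
  have hdvd : u - 1 ∣ (1 + X * σ ^ 2) * (u - 1 - σ * X * u) * w + X * σ ^ 2 := by
    let φ := map (Polynomial.evalRingHom (1 : R))
    have hφu : φ u = 1 := by simp [φ, hu]
    have hφσ : φ σ = s := by ext n; simp [φ, hσ]
    have hφX : φ X = X := map_X _
    have hφw : φ w = 1 + X * (1 + X * s ^ 2) * φ w ^ 2 := by
      simpa only [map_add, map_mul, map_pow, map_one, hφu, hφσ, hφX, mul_one] using congrArg φ hw
    have hφw_eq : (1 + X * s ^ 2) * φ w = s :=
      eq_of_eq_add_X_mul_sq (a := 1 + X * s ^ 2)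
        (by linear_combination (1 + X * s ^ 2) * hφw) (by linear_combination hs)
    rw [hu_sub_one]
    refine C_X_sub_one_dvd_of_map_eval_one_eq_zero ?_
    change φ _ = 0
    simp only [← hu_sub_one, map_add, map_mul, map_pow, map_sub, map_one, hφu, hφσ, hφX]
    linear_combination -s * X * hφw_eq
  obtain ⟨M, hM⟩ := hdvd
  have hσs : σ = 1 + 2 * X * σ ^ 2 := by
    simpa only [map_add, map_mul, map_pow, map_one, map_ofNat, map_X] using
      congrArg (map Polynomial.C) hs
  have hequation := catalyticEquation_of_sub_one_mul_eq
    (hu_sub_one ▸ isLeftRegular_C_X_sub_one) hσs hw hM.symm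
  exact ⟨M, by simpa only [map_sub, map_add, map_mul, map_pow, map_one, map_X] using hequation⟩

theorem catalyticEquation_iff {F : R⟦X⟧} {M : R[X]⟦X⟧} :
    CatalyticEquation X (C Polynomial.X) (map Polynomial.C F) M ↔
      coeff 0 M = 1 ∧ ∀ n, (Polynomial.X - 1) * coeff (n + 1) M =
        Polynomial.X * ((Polynomial.X - 1) * ∑ ij ∈ antidiagonal n,
          coeff ij.1 M * coeff ij.2 M + (coeff n M - Polynomial.C (coeff n F))) := by
  have hsub_one : C Polynomial.X - 1 = C (Polynomial.X - 1 : R[X]) := by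
    rw [map_sub, map_one]
  rw [CatalyticEquation, hsub_one, PowerSeries.ext_iff, ← Nat.and_forall_add_one]
  refine and_congr ?_ (forall_congr' fun n => ?_)
  · rw [coeff_C_mul, mul_assoc, coeff_zero_X_mul, isLeftRegular_X_sub_one.mul_left_eq_zero_iff,
      map_sub, coeff_zero_one, sub_eq_zero]
  · rw [coeff_C_mul, mul_assoc, coeff_succ_X_mul, coeff_C_mul, map_add, coeff_C_mul, pow_two,
      coeff_mul, map_sub, map_sub, coeff_map, coeff_one, if_neg n.succ_ne_zero, sub_zero]

theorem CatalyticEquation.eval_one_coeff {F : R⟦X⟧} {M : R[X]⟦X⟧}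
    (h : CatalyticEquation X (C Polynomial.X) (map Polynomial.C F) M) (n : ℕ) :
    (coeff n M).eval 1 = coeff n F := by
  have heval := congrArg (Polynomial.eval 1) ((catalyticEquation_iff.1 h).2 n)
  simpa [sub_eq_zero] using heval.symm

theorem CatalyticEquation.unique {F F' : R⟦X⟧} {M M' : R[X]⟦X⟧}
    (h : CatalyticEquation X (C Polynomial.X) (map Polynomial.C F) M)
    (h' : CatalyticEquation X (C Polynomial.X) (map Polynomial.C F') M') :
    F = F' ∧ M = M' := by
  obtain ⟨hzero, hsucc⟩ := catalyticEquation_iff.1 h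
  obtain ⟨hzero', hsucc'⟩ := catalyticEquation_iff.1 h'
  have hM : ∀ n, coeff n M = coeff n M' := by
    intro n
    induction n using Nat.strong_induction_on with
    | h n ih =>
      cases n with
      | zero => rw [hzero, hzero']
      | succ n =>
        refine isLeftRegular_X_sub_one ?_
        have hsum : ∑ ij ∈ antidiagonal n, coeff ij.1 M * coeff ij.2 M =
            ∑ ij ∈ antidiagonal n, coeff ij.1 M' * coeff ij.2 M' := by
          refine Finset.sum_congr rfl fun ij hij => ?_
          rw [mem_antidiagonal] at hij
          rw [ih ij.1 (by omega), ih ij.2 (by omega)]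
        change (Polynomial.X - 1) * _ = (Polynomial.X - 1) * _
        rw [hsucc, hsucc', hsum, ← h.eval_one_coeff, ← h'.eval_one_coeff, ih n n.lt_succ_self]
  refine ⟨PowerSeries.ext fun n => ?_, PowerSeries.ext hM⟩
  rw [← h.eval_one_coeff, ← h'.eval_one_coeff, hM]

end CatalyticEquation

/-! ### Counting modern intervals -/

theorem catalyticEquation_mk_modernPoly :
    CatalyticEquation X (C Polynomial.X)
      (map Polynomial.C (mk fun n => ((modernIntervals n).card : ℤ))) (mk modernPoly) := by
  refine catalyticEquation_iff.2 ⟨?_, fun n => ?_⟩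
  · rw [coeff_mk, modernPoly_zero]
  · simp only [coeff_mk]
    exact modernPoly_succ n

/-- The Catalan series in `2X`. -/
noncomputable def scaledCatalanSeries : ℤ⟦X⟧ :=
  rescale 2 (map (Nat.castRingHom ℤ) catalanSeries)

theorem coeff_scaledCatalanSeries (n : ℕ) :
    coeff n scaledCatalanSeries = 2 ^ n * (catalan n : ℤ) := by
  simp [scaledCatalanSeries, coeff_rescale]

theorem scaledCatalanSeries_eq :
    scaledCatalanSeries = 1 + 2 * X * scaledCatalanSeries ^ 2 := by
  have hcatalan := congrArg (fun f => rescale (2 : ℤ) (map (Nat.castRingHom ℤ) f))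
    catalanSeries_sq_mul_X_add_one
  simp only [map_add, map_mul, map_pow, map_one, map_X, rescale_X, map_ofNat] at hcatalan
  rw [← scaledCatalanSeries] at hcatalan
  linear_combination -hcatalan

theorem mk_card_modernIntervals :
    (mk fun n => ((modernIntervals n).card : ℤ)) = scaledCatalanSeries -
      X * scaledCatalanSeries ^ 2 * (1 + X * scaledCatalanSeries ^ 2) :=
  (catalyticEquation_mk_modernPoly.unique
    (exists_catalyticEquation scaledCatalanSeries_eq).choose_spec).1

theorem four_mul_mk_card_modernIntervals :
    4 * (mk fun n => ((modernIntervals n).card : ℤ)) =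
      4 * scaledCatalanSeries - scaledCatalanSeries ^ 2 + 1 := by
  rw [mk_card_modernIntervals]
  linear_combination
    (2 * X * scaledCatalanSeries ^ 2 + scaledCatalanSeries + 1) * scaledCatalanSeries_eq

theorem coeff_scaledCatalanSeries_sq (n : ℕ) :
    coeff n (scaledCatalanSeries ^ 2) = 2 ^ n * (catalan (n + 1) : ℤ) := by
  have hcoeff := congrArg (coeff (n + 1)) scaledCatalanSeries_eq
  rw [coeff_scaledCatalanSeries, ← map_ofNat C 2, mul_assoc, map_add, coeff_C_mul,
    coeff_succ_X_mul, coeff_one, if_neg n.succ_ne_zero, zero_add, pow_succ', mul_assoc] at hcoeff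
  exact (mul_left_cancel₀ two_ne_zero hcoeff).symm

theorem four_mul_card_modernIntervals {n : ℕ} (hn : n ≠ 0) :
    4 * ((modernIntervals n).card : ℤ) = 2 ^ n * (4 * catalan n - catalan (n + 1)) := by
  have hcoeff := congrArg (coeff n) four_mul_mk_card_modernIntervals
  rw [← map_ofNat C 4, map_add, map_sub, coeff_C_mul, coeff_C_mul, coeff_mk,
    coeff_scaledCatalanSeries, coeff_scaledCatalanSeries_sq, coeff_one, if_neg hn] at hcoeff
  linear_combination hcoeff

theorem add_two_mul_catalan_succ (n : ℕ) :
    (n + 2) * catalan (n + 1) = 2 * (2 * n + 1) * catalan n := by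
  refine mul_left_cancel₀ n.succ_ne_zero ?_
  calc
    (n + 1) * ((n + 2) * catalan (n + 1)) = (n + 1) * (n + 1).centralBinom := by
      rw [← succ_mul_catalan_eq_centralBinom]
    _ = 2 * (2 * n + 1) * n.centralBinom := n.succ_mul_centralBinom_succ
    _ = (n + 1) * (2 * (2 * n + 1) * catalan n) := by
      rw [← succ_mul_catalan_eq_centralBinom]
      ring

theorem card_modernIntervals {n : ℕ} (hn : n ≠ 0) :
    (n + 1) * (n + 2) * (modernIntervals n).card = 3 * 2 ^ (n - 1) * (2 * n).choose n := by
  have hcard := four_mul_card_modernIntervals hn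
  have hsucc : ((n : ℤ) + 2) * catalan (n + 1) = 2 * (2 * n + 1) * catalan n :=
    mod_cast add_two_mul_catalan_succ n
  have hchoose : ((n : ℤ) + 1) * catalan n = (2 * n).choose n := by
    rw [← Nat.centralBinom_eq_two_mul_choose, ← succ_mul_catalan_eq_centralBinom]
    push_cast
    rfl
  have hpow : (2 : ℤ) * 2 ^ (n - 1) = 2 ^ n := mul_pow_sub_one hn 2
  refine mul_left_cancel₀ four_ne_zero (Nat.cast_injective (R := ℤ) ?_)
  push_cast
  linear_combination (n + 1) * (n + 2) * hcard - 2 ^ n * (n + 1) * hsucc + 6 * 2 ^ n * hchoose -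
    6 * (2 * n).choose n * hpow

theorem coe_modernIntervals (n : ℕ) :
    (modernIntervals n : Set (BT × BT)) = {p | interval p n ∧ modern p} := by
  ext p
  rw [Finset.mem_coe, mem_modernIntervals]
  constructor
  · rintro ⟨hn, hle, hmodern⟩
    exact ⟨⟨hn, hle.size_eq.symm.trans hn, hle⟩, hmodern⟩
  · rintro ⟨⟨hn, -, hle⟩, hmodern⟩
    exact ⟨hn, hle, hmodern⟩

theorem riseF_injective : Function.Injective riseF := fun _ _ h =>
  Prod.ext (node.inj (congrArg Prod.fst h)).1 (node.inj (congrArg Prod.snd h)).2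

theorem isNew_riseF_iff {p : BT × BT} : isNew (riseF p) ↔ tle p.1 p.2 ∧ modern p := by
  constructor
  · rintro ⟨hmodern, S, S', hle, hrise⟩
    obtain rfl := riseF_injective hrise
    exact ⟨hle, hmodern⟩
  · rintro ⟨hle, hmodern⟩
    exact ⟨hmodern, p.1, p.2, hle, rfl⟩

theorem bijOn_riseF (n : ℕ) : Set.BijOn riseF {p | interval p n ∧ modern p}
    {p | p.1.size = n + 1 ∧ p.2.size = n + 1 ∧ isNew p} := by
  refine ⟨?_, riseF_injective.injOn, ?_⟩
  · rintro p ⟨⟨hn, hn', hle⟩, hmodern⟩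
    exact ⟨by rw [riseF, size, size, hn, add_zero], by rw [riseF, size, size, hn', zero_add],
      isNew_riseF_iff.2 ⟨hle, hmodern⟩⟩
  · rintro _ ⟨hn, hn', hnew⟩
    obtain ⟨-, S, S', -, rfl⟩ := id hnew
    obtain ⟨hle, hmodern⟩ := isNew_riseF_iff.1 hnew
    simp only [riseF, size, add_zero, zero_add, Nat.add_right_cancel_iff] at hn hn'
    exact ⟨(S, S'), ⟨⟨hn, hn', hle⟩, hmodern⟩, rfl⟩

end BT

theorem rise_bijection_and_count_new_intervals (n : ℕ) (hn : 1 ≤ n) :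
    Set.BijOn BT.riseF {p : BT × BT | BT.interval p n ∧ BT.modern p}
        {p : BT × BT | p.1.size = n + 1 ∧ p.2.size = n + 1 ∧ BT.isNew p} ∧
      (n + 1) * (n + 2) *
          Set.ncard {p : BT × BT | p.1.size = n + 1 ∧ p.2.size = n + 1 ∧ BT.isNew p} =
        3 * 2 ^ (n - 1) * Nat.choose (2 * n) n := by
  have hbij := BT.bijOn_riseF n
  refine ⟨hbij, ?_⟩
  rw [← hbij.image_eq, hbij.injOn.ncard_image, ← BT.coe_modernIntervals,
    Set.ncard_coe_finset]
  exact BT.card_modernIntervals (Nat.one_le_iff_ne_zero.1 hn)
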